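/- Assume the main setup: 𝒳, 𝒴 finite of equal cardinality K, P_{X|Y} an invertible column-stochastic matrix, P_Y a positive probability vector, P_X = P_{X|Y} ⬝ P_Y positive. Let a, b, c, d be reals with a + b = 1 and c + d = 1, let p₀ ∈ [0,1] with p₁ = 1 − p₀, and let J₀, J₁ ∈ ℝ^𝒳 satisfy ∑_x J_i(x) = 0 and ∑_x J_i(x)²/P_X(x) ≤ 1 for i = 0, 1. For ε ∈ ℝ define I(ε) = p₀ · ∑_y (P_Y(y) + ε·(P_{X|Y}⁻¹ ⬝ (a•J₀ + b•J₁))(y)) · log(1 + ε·(P_{X|Y}⁻¹ ⬝ (a•J₀ + b•J₁))(y)/P_Y(y)) + p₁ · ∑_y (P_Y(y) + ε·(P_{X|Y}⁻¹ ⬝ (c•J₀ + d•J₁))(y)) · log(1 + ε·(P_{X|Y}⁻¹ ⬝ (c•J₀ + d•J₁))(y)/P_Y(y)). Then ε ↦ I(ε) − (ε²/2)·[ p₀·‖W ⬝ (a•L₀ + b•L₁)‖² + p₁·‖W ⬝ (c•L₀ + d•L₁)‖² ] is o(ε²) as ε → 0, where W = [√P_Y⁻¹] ⬝ P_{X|Y}⁻¹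 ⬝ [√P_X] and L_i = [√P_X⁻¹] ⬝ J_i. -/

import Mathlib

open Matrix Filter Asymptotics

/-- Euclidean norm of a real vector on a finite index type. -/
noncomputable def euclNorm {I : Type*} [Fintype I] (v : I → ℝ) : ℝ :=
  Real.sqrt (∑ i, v i ^ 2)

/-- A matrix is column-stochastic if its entries are nonnegative and each column sums to 1. -/
def ColStochastic {I J : Type*} [Fintype I] (M : Matrix I J ℝ) : Prop :=
  (∀ i j, 0 ≤ M i j) ∧ ∀ j, ∑ i, M i j = 1

theorem aux_log : (fun t : ℝ => (1 + t) * Real.log (1 + t) - t - t ^ 2 / 2) =o[nhds 0]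
    (fun t => t ^ 2) := by
  have hO : (fun t : ℝ => (1 + t) * Real.log (1 + t) - t - t ^ 2 / 2) =O[nhds 0]
      (fun t => t ^ 3) := by
    refine IsBigO.of_bound 4 ?_
    have : ∀ᶠ t : ℝ in nhds 0, |t| < 1 / 2 := by
      have := Metric.ball_mem_nhds (0 : ℝ) (by norm_num : (0 : ℝ) < 1 / 2)
      filter_upwards [this] with t ht
      simpa using ht
    filter_upwards [this] with t ht
    have h := Real.abs_log_sub_add_sum_range_le (x := -t) (by rw [abs_neg]; linarith) 2
    rw [abs_neg] at h
    simp only [Finset.sum_range_succ, Finset.sum_range_zero] at h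
    norm_num at h
    have h2 : |t| ^ 3 / (1 - |t|) ≤ 2 * |t| ^ 3 := by
      rw [div_le_iff₀ (by linarith)]
      have : 0 ≤ |t| ^ 3 := by positivity
      nlinarith
    rw [Real.norm_eq_abs, Real.norm_eq_abs, abs_pow]
    have e : (1 + t) * Real.log (1 + t) - t - t ^ 2 / 2
        = (1 + t) * (-t + t ^ 2 / 2 + Real.log (1 + t)) - t ^ 3 / 2 := by ring
    rw [e]
    refine (abs_sub _ _).trans ?_
    rw [abs_mul, abs_div, abs_pow, abs_two]
    have h3 : |1 + t| ≤ 3 / 2 := by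
      have := abs_add_le 1 t
      rw [abs_one] at this
      linarith
    have h4 := mul_le_mul h3 (h.trans h2) (abs_nonneg _) (by norm_num)
    have : 0 ≤ |t| ^ 3 := by positivity
    linarith
  exact hO.trans_isLittleO (isLittleO_pow_pow (by norm_num))

theorem aux_sum {ι : Type*} [Fintype ι] (p v : ι → ℝ) (hp : ∀ y, 0 < p y)
    (hv : ∑ y, v y = 0) :
    (fun ε : ℝ => ∑ y, (p y + ε * v y) * Real.log (1 + ε * v y / p y)
      - ε ^ 2 / 2 * ∑ y, v y ^ 2 / p y) =o[nhds 0] (fun ε => ε ^ 2) := by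
  have key : ∀ y ∈ (Finset.univ : Finset ι), (fun ε : ℝ => p y *
      ((1 + ε * v y / p y) * Real.log (1 + ε * v y / p y) - ε * v y / p y
        - (ε * v y / p y) ^ 2 / 2)) =o[nhds 0] (fun ε => ε ^ 2) := by
    intro y _
    refine IsLittleO.const_mul_left ?_ _
    have ht : Tendsto (fun ε : ℝ => ε * v y / p y) (nhds 0) (nhds 0) := by
      have : Continuous (fun ε : ℝ => ε * v y / p y) := by fun_prop
      simpa using this.tendsto 0
    refine (aux_log.comp_tendsto ht).trans_isBigO ?_
    have : ((fun t : ℝ => t ^ 2) ∘ fun ε : ℝ => ε * v y / p y)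
        = fun ε => (v y / p y) ^ 2 * ε ^ 2 := by
      funext ε
      simp only [Function.comp]
      ring
    rw [this]
    exact (isBigO_refl _ _).const_mul_left _
  refine (IsLittleO.fun_sum key).congr_left ?_
  intro ε
  have h0 : ∑ y, ε * v y = 0 := by rw [← Finset.mul_sum, hv, mul_zero]
  rw [← sub_zero (∑ y, (p y + ε * v y) * Real.log (1 + ε * v y / p y)), ← h0, Finset.mul_sum,
    ← Finset.sum_sub_distrib, ← Finset.sum_sub_distrib]
  refine Finset.sum_congr rfl fun y _ => ?_
  have := (hp y).ne'
  generalize Real.log (1 + ε * v y / p y) = l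
  field_simp

theorem aux_v {X Y : Type*} [Fintype X] [Fintype Y] [DecidableEq X]
    (P : Matrix X Y ℝ) (hP : ColStochastic P) (Q : Matrix Y X ℝ) (h : P * Q = 1)
    (J : X → ℝ) (hJ : ∑ x, J x = 0) : ∑ y, Q.mulVec J y = 0 := by
  have e : P.mulVec (Q.mulVec J) = J := by rw [Matrix.mulVec_mulVec, h, Matrix.one_mulVec]
  rw [← hJ]
  conv_rhs => rw [← e]
  generalize Q.mulVec J = v
  simp only [Matrix.mulVec, dotProduct]
  rw [Finset.sum_comm]
  refine Finset.sum_congr rfl fun y _ => ?_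
  rw [← Finset.sum_mul, hP.2 y, one_mul]

theorem aux_norm {X Y : Type*} [Fintype X] [Fintype Y] [DecidableEq X] [DecidableEq Y]
    (Q : Matrix Y X ℝ) (p : Y → ℝ) (hp : ∀ y, 0 < p y) (q : X → ℝ) (hq : ∀ y, 0 < q y)
    (a b : ℝ) (J₀ J₁ : X → ℝ) :
    euclNorm ((diagonal (fun y => (Real.sqrt (p y))⁻¹) * Q *
      diagonal (fun x => Real.sqrt (q x))).mulVec
      (a • ((diagonal fun x => (Real.sqrt (q x))⁻¹).mulVec J₀)
        + b • ((diagonal fun x => (Real.sqrt (q x))⁻¹).mulVec J₁))) ^ 2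
      = ∑ y, Q.mulVec (a • J₀ + b • J₁) y ^ 2 / p y := by
  rw [← Matrix.mulVec_smul, ← Matrix.mulVec_smul, ← Matrix.mulVec_add, Matrix.mulVec_mulVec,
    Matrix.mul_assoc, Matrix.diagonal_mul_diagonal]
  have : (fun i => Real.sqrt (q i) * (Real.sqrt (q i))⁻¹) = fun _ => 1 := by
    funext i
    exact mul_inv_cancel₀ (Real.sqrt_pos.2 (hq i)).ne'
  rw [this, Matrix.diagonal_one, Matrix.mul_one, ← Matrix.mulVec_mulVec, euclNorm,
    Real.sq_sqrt (Finset.sum_nonneg fun _ _ => sq_nonneg _)]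
  refine Finset.sum_congr rfl fun y _ => ?_
  rw [Matrix.mulVec_diagonal, mul_pow, inv_pow, Real.sq_sqrt (hp y).le]
  ring

theorem stmt_19 {𝒳 𝒴 : Type*} [Fintype 𝒳] [Fintype 𝒴] [DecidableEq 𝒳] [DecidableEq 𝒴]
    (hcard : Fintype.card 𝒳 = Fintype.card 𝒴)
    (PXY : Matrix 𝒳 𝒴 ℝ) (hPXY : ColStochastic PXY)
    (PXYinv : Matrix 𝒴 𝒳 ℝ) (hinv1 : PXY * PXYinv = 1) (hinv2 : PXYinv * PXY = 1)
    (PY : 𝒴 → ℝ) (hPYpos : ∀ y, 0 < PY y) (hPYsum : ∑ y, PY y = 1)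
    (PX : 𝒳 → ℝ) (hPX : PX = PXY.mulVec PY) (hPXpos : ∀ x, 0 < PX x)
    (a b c d : ℝ) (hab : a + b = 1) (hcd : c + d = 1)
    (p₀ : ℝ) (hp₀0 : 0 ≤ p₀) (hp₀1 : p₀ ≤ 1)
    (J₀ J₁ : 𝒳 → ℝ)
    (hJ₀1 : ∑ x, J₀ x = 0) (hJ₁1 : ∑ x, J₁ x = 0)
    (hJ₀3 : ∑ x, J₀ x ^ 2 / PX x ≤ 1) (hJ₁3 : ∑ x, J₁ x ^ 2 / PX x ≤ 1)
    (I : ℝ → ℝ)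
    (hI : ∀ ε, I ε =
      p₀ * ∑ y, (PY y + ε * PXYinv.mulVec (a • J₀ + b • J₁) y) *
        Real.log (1 + ε * PXYinv.mulVec (a • J₀ + b • J₁) y / PY y)
      + (1 - p₀) * ∑ y, (PY y + ε * PXYinv.mulVec (c • J₀ + d • J₁) y) *
        Real.log (1 + ε * PXYinv.mulVec (c • J₀ + d • J₁) y / PY y))
    (W : Matrix 𝒴 𝒳 ℝ)
    (hW : W = diagonal (fun y => (Real.sqrt (PY y))⁻¹) * PXYinv *
      diagonal (fun x => Real.sqrt (PX x)))
    (L₀ L₁ : 𝒳 → ℝ)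
    (hL₀ : L₀ = (diagonal fun x => (Real.sqrt (PX x))⁻¹).mulVec J₀)
    (hL₁ : L₁ = (diagonal fun x => (Real.sqrt (PX x))⁻¹).mulVec J₁) :
    (fun ε => I ε - ε ^ 2 / 2 *
        (p₀ * euclNorm (W.mulVec (a • L₀ + b • L₁)) ^ 2
          + (1 - p₀) * euclNorm (W.mulVec (c • L₀ + d • L₁)) ^ 2))
      =o[nhds 0] (fun ε => ε ^ 2) := by
  have hs : ∀ s t : ℝ, ∑ x, (s • J₀ + t • J₁) x = 0 := by
    intro s t
    simp [Finset.sum_add_distrib, ← Finset.mul_sum, hJ₀1, hJ₁1]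
  have h1 := aux_sum PY _ hPYpos (aux_v PXY hPXY PXYinv hinv1 _ (hs a b))
  have h2 := aux_sum PY _ hPYpos (aux_v PXY hPXY PXYinv hinv1 _ (hs c d))
  rw [hW, hL₀, hL₁, aux_norm _ _ hPYpos _ hPXpos, aux_norm _ _ hPYpos _ hPXpos]
  refine ((h1.const_mul_left p₀).add (h2.const_mul_left (1 - p₀))).congr_left ?_
  intro ε
  rw [hI]
  ring
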